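/- Let u_n : ℝ → ℂ be defined by u_n(x) = (-1)^n (4n)! / (2^{4n}(2n)!) · ((x-i)^{-(2n+1/2)} + (x+i)^{-(2n+1/2)}) with principal-branch complex powers. Then u_n(0) = √2 · (4n)! / (2^{4n} (2n)!) (a positive real number), and for every real ε > 0 the sequence ε^{2n} u_n(0) tends to +∞ as n → ∞; in particular the asymptotic series Σ_{n≥0} ε^{2n} u_n(0) diverges for every ε > 0. -/

import Mathlib

open Complex Filter

/-- The terms of the asymptotic power series solution of
`ε² u'' + u = (x+i)^{-1/2} + (x-i)^{-1/2}`. -/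
noncomputable def uTerm (n : ℕ) (x : ℝ) : ℂ :=
  (-1) ^ n * (Nat.factorial (4 * n) : ℂ) / (2 ^ (4 * n) * (Nat.factorial (2 * n) : ℂ)) *
    (((x : ℂ) - I) ^ (-(2 * (n : ℂ) + 1 / 2)) + ((x : ℂ) + I) ^ (-(2 * (n : ℂ) + 1 / 2)))

/-! At the origin the two branches combine into `(-i)^s + i^s = 2 cos (π s / 2)`. For
`s = -(2n + 1/2)` this is `(-1)^n √2`, whose sign cancels the prefactor `(-1)^n` of `u_n`. Hence
`ε^{2n} u_n(0) = √2 · c^m (2m)! / m!` with `c = ε / 4` and `m = 2n`, and `(2m)! / m! ≥ m!` outgrows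
every geometric sequence. -/

section FactorialGrowth

variable {K : Type*} [Field K] [LinearOrder K] [IsStrictOrderedRing K]

theorem factorial_le_factorial_two_mul_div_factorial (n : ℕ) :
    (n.factorial : K) ≤ (2 * n).factorial / n.factorial := by
  rw [le_div_iff₀ (by positivity), two_mul]
  exact_mod_cast Nat.le_of_dvd (n + n).factorial_pos
    (Nat.factorial_mul_factorial_dvd_factorial_add n n)

variable [FloorSemiring K] [TopologicalSpace K] [OrderTopology K] {c : K}

theorem tendsto_pow_mul_factorial_atTop (hc : 0 < c) :
    Tendsto (fun n : ℕ => c ^ n * n.factorial) atTop atTop := by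
  have tendsto_inv :
      Tendsto (fun n : ℕ => c⁻¹ ^ n / n.factorial) atTop (nhdsWithin 0 (Set.Ioi 0)) :=
    tendsto_nhdsWithin_iff.2 ⟨FloorSemiring.tendsto_pow_div_factorial_atTop c⁻¹,
      .of_forall fun n => Set.mem_Ioi.2 (by positivity)⟩
  refine tendsto_inv.inv_tendsto_nhdsGT_zero.congr fun n => ?_
  rw [Pi.inv_apply, inv_div, inv_pow, div_inv_eq_mul, mul_comm]

theorem tendsto_pow_mul_factorial_two_mul_div_factorial_atTop (hc : 0 < c) :
    Tendsto (fun n : ℕ => c ^ n * ((2 * n).factorial / n.factorial)) atTop atTop :=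
  tendsto_atTop_mono
    (fun n => mul_le_mul_of_nonneg_left (factorial_le_factorial_two_mul_div_factorial n)
      (by positivity))
    (tendsto_pow_mul_factorial_atTop hc)

end FactorialGrowth

theorem neg_I_cpow_add_I_cpow (s : ℂ) : (-I) ^ s + I ^ s = 2 * cos (Real.pi / 2 * s) := by
  rw [cpow_def_of_ne_zero (neg_ne_zero.2 I_ne_zero), cpow_def_of_ne_zero I_ne_zero, log_neg_I,
    log_I, two_cos, add_comm]
  ring_nf

theorem two_mul_cos_pi_div_four_add_nat_mul_pi (n : ℕ) :
    2 * Real.cos (Real.pi / 4 + n * Real.pi) = (-1) ^ n * √2 := by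
  rw [Real.cos_add_nat_mul_pi, Real.cos_pi_div_four]
  ring

theorem neg_I_cpow_add_I_cpow_neg_two_mul_add_half (n : ℕ) :
    (-I) ^ (-(2 * (n : ℂ) + 1 / 2)) + I ^ (-(2 * (n : ℂ) + 1 / 2)) = (-1) ^ n * (√2 : ℝ) := by
  have angle : (Real.pi / 2 * -(2 * (n : ℂ) + 1 / 2) : ℂ) =
      -((Real.pi / 4 + n * Real.pi : ℝ) : ℂ) := by
    push_cast
    ring
  rw [neg_I_cpow_add_I_cpow, angle, cos_neg, ← ofReal_cos]
  exact_mod_cast two_mul_cos_pi_div_four_add_nat_mul_pi n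

theorem uTerm_zero (n : ℕ) :
    uTerm n 0 = ((√2 * ((4 * n).factorial : ℝ) /
      (2 ^ (4 * n) * ((2 * n).factorial : ℝ)) : ℝ) : ℂ) := by
  have sign_sq : (-1 : ℂ) ^ n * (-1) ^ n = 1 := by rw [← mul_pow]; norm_num
  rw [uTerm, ofReal_zero, zero_sub, zero_add, neg_I_cpow_add_I_cpow_neg_two_mul_add_half]
  push_cast
  linear_combination
    (((4 * n).factorial : ℂ) / (2 ^ (4 * n) * ((2 * n).factorial : ℂ)) * (√2 : ℝ)) * sign_sq

theorem tendsto_sqrt_two_mul_pow_mul_factorial_div_atTop {ε : ℝ} (hε : 0 < ε) :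
    Tendsto (fun n : ℕ => √2 * ε ^ (2 * n) * ((4 * n).factorial : ℝ) /
      (2 ^ (4 * n) * ((2 * n).factorial : ℝ))) atTop atTop := by
  have even_subsequence : Tendsto (fun n : ℕ => 2 * n) atTop atTop :=
    tendsto_id.const_mul_atTop' two_pos
  have growth := ((tendsto_pow_mul_factorial_two_mul_div_factorial_atTop
    (div_pos hε four_pos)).comp even_subsequence).const_mul_atTop (Real.sqrt_pos.2 two_pos)
  refine growth.congr fun n => ?_
  have four_pow : (4 : ℝ) ^ (2 * n) = 2 ^ (4 * n) := by
    rw [pow_mul, pow_mul]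
    norm_num
  rw [Function.comp_apply, show 2 * (2 * n) = 4 * n by ring, div_pow, four_pow]
  field_simp

theorem norm_pow_mul_uTerm_zero (ε : ℝ) (n : ℕ) :
    ‖(ε : ℂ) ^ (2 * n) * uTerm n 0‖ = √2 * ε ^ (2 * n) * ((4 * n).factorial : ℝ) /
      (2 ^ (4 * n) * ((2 * n).factorial : ℝ)) := by
  have even_pow_nonneg : 0 ≤ ε ^ (2 * n) := (even_two_mul n).pow_nonneg ε
  rw [uTerm_zero, ← ofReal_pow, ← ofReal_mul, norm_real, Real.norm_of_nonneg (by positivity)]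
  ring

/-- At `x = 0` the series terms are the positive reals `√2 (4n)!/(2^{4n}(2n)!)`, and
for every `ε > 0` the sequence `ε^{2n} u_n(0)` tends to `+∞`: the asymptotic series
diverges at `x = 0` for every `ε > 0`. -/
theorem series_diverges :
    (∀ n : ℕ, uTerm n 0 =
      ((Real.sqrt 2 * (Nat.factorial (4 * n) : ℝ) /
        (2 ^ (4 * n) * (Nat.factorial (2 * n) : ℝ)) : ℝ) : ℂ)) ∧
    (∀ ε : ℝ, 0 < ε →
      Tendsto (fun n : ℕ =>
        Real.sqrt 2 * ε ^ (2 * n) * (Nat.factorial (4 * n) : ℝ) /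
          (2 ^ (4 * n) * (Nat.factorial (2 * n) : ℝ))) atTop atTop ∧
      Tendsto (fun n : ℕ => ‖(ε : ℂ) ^ (2 * n) * uTerm n 0‖) atTop atTop) := by
  refine ⟨uTerm_zero, fun ε hε => ?_⟩
  have growth := tendsto_sqrt_two_mul_pow_mul_factorial_div_atTop hε
  exact ⟨growth, growth.congr fun n => (norm_pow_mul_uTerm_zero ε n).symm⟩
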